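/- arXiv:1605.00818 — 2 statements merged into one kernel-verified Lean document; each statement's English description precedes it below -/
import Mathlib

section
/- Let n, m and α be odd integers with n ≥ m ≥ 3 and 0 ≤ α ≤ n, and let β = n − α. If it is not the case that α ∈ {2, 4} or β ∈ {1, 3}, then (α, β) ∈ HWP(C_m[n]; m, n); conversely, (α, β) ∈ HWP(C_m[n]; m, n) implies β = n − α. -/
open SimpleGraph

/-- `F` is a `C_k`-factor of `H`: a spanning subgraph of `H` that is 2-regular
and each of whose connected components has exactly `k` vertices. -/
def IsCycleFactor {V : Type*} (H F : SimpleGraph V) (k : ℕ) : Prop :=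
  F ≤ H ∧ (∀ v, (F.neighborSet v).ncard = 2) ∧
    ∀ v : V, {w | F.Reachable v w}.ncard = k

/-- The family of graphs `F` partitions the edge set of `H`. -/
def IsDecomp {V ι : Type*} (H : SimpleGraph V) (F : ι → SimpleGraph V) : Prop :=
  (Pairwise fun i j => Disjoint (F i).edgeSet (F j).edgeSet) ∧
  ∀ e, e ∈ H.edgeSet ↔ ∃ i, e ∈ (F i).edgeSet

/-- `HW H m n α β`: the edge set of `H` can be partitioned into
`α` `C_m`-factors and `β` `C_n`-factors. -/
def HW {V : Type*} (H : SimpleGraph V) (m n α β : ℕ) : Prop :=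
  ∃ F : Fin α ⊕ Fin β → SimpleGraph V,
    (∀ i, IsCycleFactor H (F (Sum.inl i)) m) ∧
    (∀ j, IsCycleFactor H (F (Sum.inr j)) n) ∧
    IsDecomp H F

/-- `(α, β) ∈ HWP(v; m, n)` for odd `v`: `K_v` has a 2-factorization into
`α` `C_m`-factors and `β` `C_n`-factors. -/
def HWPodd (v m n α β : ℕ) : Prop := HW (⊤ : SimpleGraph (Fin v)) m n α β

/-- `F ≤ H` is a vertex-disjoint union of `c` cycles of length `k`:
2-regular on its support, every component has `k` vertices, and the support
has `k * c` vertices. -/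
def IsCycleClass {V : Type*} (H F : SimpleGraph V) (k c : ℕ) : Prop :=
  F ≤ H ∧ (∀ v ∈ F.support, (F.neighborSet v).ncard = 2) ∧
  (∀ v ∈ F.support, {w | F.Reachable v w}.ncard = k) ∧
  F.support.ncard = k * c

/-- An almost resolvable `k`-cycle system of order `v`: a partition of the
edges of `K_v` into `(v-1)/2` almost parallel classes (each a vertex-disjoint
union of `(v-1)/k` `k`-cycles) together with one half-parallel class
(a vertex-disjoint union of `(v-1)/(2k)` `k`-cycles). -/
def IsARCS (k v : ℕ) : Prop :=
  ∃ F : Fin ((v - 1) / 2) ⊕ Unit → SimpleGraph (Fin v),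
    (∀ i, IsCycleClass ⊤ (F (Sum.inl i)) k ((v - 1) / k)) ∧
    (∀ j, IsCycleClass ⊤ (F (Sum.inr j)) k ((v - 1) / (2 * k))) ∧
    IsDecomp (⊤ : SimpleGraph (Fin v)) F

/-- The lexicographic product `C_m[n]` of the cycle `C_m` with the empty graph
on `n` vertices, on vertex set `ZMod m × ZMod n`. -/
def lexCycle (m n : ℕ) : SimpleGraph (ZMod m × ZMod n) :=
  SimpleGraph.fromRel (fun a b => a.1 - b.1 = 1)

/-- The Cayley graph of an additive group with connection set `S`. -/
def cayley {Γ : Type*} [AddGroup Γ] (S : Set Γ) : SimpleGraph Γ :=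
  SimpleGraph.fromRel (fun a b => a - b ∈ S)


lemma pot_exists {G : Type*} [AddCommGroup G] (m : ℕ) [NeZero m] (d : ℕ → G)
    (h : ∑ j ∈ Finset.range m, d j = 0) :
    ∃ D : ZMod m → G, ∀ i, D (i + 1) = D i + d i.val := by
  refine ⟨fun i => ∑ j ∈ Finset.range i.val, d j, fun i => ?_⟩
  have hi := ZMod.val_lt i
  simp only
  rw [← Finset.sum_range_succ]
  by_cases hc : i.val + 1 = m
  · have : i + 1 = 0 := by
      have h2 : ((i.val + 1 : ℕ) : ZMod m) = 0 := by rw [hc]; simp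
      simpa using h2
    rw [this, hc, h]; simp
  · have h2 : i + 1 = ((i.val + 1 : ℕ) : ZMod m) := by simp
    rw [h2, ZMod.val_natCast_of_lt (by omega)]

lemma zmod_ne {k : ℕ} (hk : 3 ≤ k) : (1 : ZMod k) ≠ -1 ∧ (1 : ZMod k) ≠ 0 := by
  have : Fact (2 < k) := ⟨by omega⟩
  have : Fact (1 < k) := ⟨by omega⟩
  exact ⟨(ZMod.neg_one_ne_one (n := k)).symm, one_ne_zero⟩

/-- criterion for being a cycle factor -/
lemma factor_of_equiv {V W : Type*} (H F : SimpleGraph V) (k : ℕ) (hk : 3 ≤ k)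
    (hle : F ≤ H) (φ : V ≃ ZMod k × W)
    (hF : ∀ u v, F.Adj u v ↔ (φ u).2 = (φ v).2 ∧
      ((φ v).1 = (φ u).1 + 1 ∨ (φ u).1 = (φ v).1 + 1)) : IsCycleFactor H F k := by
  have : NeZero k := ⟨by omega⟩
  obtain ⟨h1, h2⟩ := zmod_ne hk
  refine ⟨hle, fun v => ?_, fun v => ?_⟩
  · have : F.neighborSet v = {φ.symm ((φ v).1 + 1, (φ v).2), φ.symm ((φ v).1 - 1, (φ v).2)} := by
      ext w
      simp only [SimpleGraph.mem_neighborSet, hF, Set.mem_insert_iff, Set.mem_singleton_iff,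
        Equiv.eq_symm_apply, Prod.ext_iff]
      constructor
      · rintro ⟨a, b | b⟩
        · exact Or.inl ⟨b, a.symm⟩
        · exact Or.inr ⟨by rw [b]; ring, a.symm⟩
      · rintro (⟨a, b⟩ | ⟨a, b⟩)
        · exact ⟨b.symm, Or.inl a⟩
        · exact ⟨b.symm, Or.inr (by rw [a]; ring)⟩
    rw [this, Set.ncard_pair]
    intro h
    have h3 := φ.symm.injective h
    simp only [Prod.mk.injEq, and_true] at h3
    apply h1
    have : (φ v).1 + 1 = (φ v).1 + -1 := by rw [h3]; ring
    exact add_left_cancel this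
  · have : {w | F.Reachable v w} = (fun a : ZMod k => φ.symm (a, (φ v).2)) '' Set.univ := by
      ext w
      simp only [Set.mem_ofPred_eq, Set.image_univ, Set.mem_range]
      constructor
      · rintro ⟨p⟩
        have : (φ w).2 = (φ v).2 := by
          induction p with
          | nil => rfl
          | cons h p ih => rw [ih, ((hF _ _).1 h).1]
        exact ⟨(φ w).1, by rw [← this]; simp⟩
      · rintro ⟨a, rfl⟩
        have key : ∀ t : ℕ, F.Reachable v (φ.symm ((φ v).1 + t, (φ v).2)) := by
          intro t
          induction t with
          | zero => simp
          | succ t ih =>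
            refine ih.trans (SimpleGraph.Adj.reachable ?_)
            rw [hF]
            simp [add_assoc]
        have := key (a - (φ v).1).val
        simpa using this
    rw [this, Set.ncard_image_of_injective, Set.ncard_univ, Nat.card_zmod]
    intro a b h
    simpa using h

/-- coloured arcs graph -/
def colG (m n : ℕ) {ι : Type*} (col : ZMod m → ZMod n → ZMod n → ι) (c : ι)
    (h : (1 : ZMod m) ≠ 0) :
    SimpleGraph (ZMod m × ZMod n) where
  Adj u v := (v.1 = u.1 + 1 ∧ col u.1 u.2 (v.2 - u.2) = c) ∨
    (u.1 = v.1 + 1 ∧ col v.1 v.2 (u.2 - v.2) = c)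
  symm := ⟨fun _ _ h => h.symm⟩
  loopless := ⟨fun u hu => by simp [h] at hu⟩

lemma colG_le (m n : ℕ) {ι : Type*} (col : ZMod m → ZMod n → ZMod n → ι) (c : ι)
    (h : (1 : ZMod m) ≠ 0) : colG m n col c h ≤ lexCycle m n := by
  intro u v huv
  have hne := huv.ne
  simp only [lexCycle, SimpleGraph.fromRel_adj]
  refine ⟨hne, ?_⟩
  rcases huv with ⟨a, _⟩ | ⟨a, _⟩
  · right; rw [a]; ring
  · left; rw [a]; ring

lemma colG_decomp (m n : ℕ) (hm : 3 ≤ m) {ι ι' : Type*} (col : ZMod m → ZMod n → ZMod n → ι)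
    (h : (1 : ZMod m) ≠ 0) (g : ι' ≃ ι) :
    IsDecomp (lexCycle m n) (fun c => colG m n col (g c) h) := by
  obtain ⟨h1, h2⟩ := zmod_ne hm
  have key : ∀ a b : ZMod m, b = a + 1 → a = b + 1 → False := by
    intro a b hb ha
    apply h1
    rw [hb] at ha
    have : (1 : ZMod m) + 1 = 0 := by
      have h3 : a + 0 = a + (1 + 1) := by rw [add_zero, ← add_assoc]; exact ha
      exact (add_left_cancel h3).symm
    exact eq_neg_of_add_eq_zero_left this
  constructor
  · intro c c' hcc
    rw [Set.disjoint_left]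
    intro e
    induction e with
    | _ u v =>
      simp only [SimpleGraph.mem_edgeSet]
      rintro (⟨a, b⟩ | ⟨a, b⟩) (⟨a', b'⟩ | ⟨a', b'⟩)
      · exact hcc (g.injective (b.symm.trans b'))
      · exact key _ _ a a'
      · exact key _ _ a' a
      · exact hcc (g.injective (b.symm.trans b'))
  · intro e
    induction e with
    | _ u v =>
      simp only [SimpleGraph.mem_edgeSet]
      constructor
      · intro huv
        simp only [lexCycle, SimpleGraph.fromRel_adj] at huv
        rcases huv.2 with a | a
        · exact ⟨g.symm (col v.1 v.2 (u.2 - v.2)), Or.inr ⟨by rw [← a]; ring, by simp⟩⟩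
        · exact ⟨g.symm (col u.1 u.2 (v.2 - u.2)), Or.inl ⟨by rw [← a]; ring, by simp⟩⟩
      · rintro ⟨c, hc⟩
        exact colG_le _ _ _ _ _ hc

lemma sum_pq (m p q : ℕ) (h : p = q + m) :
    ∑ j ∈ Finset.range (p + q), (if j < p then (1 : ZMod m) else -1) = 0 := by
  rw [Finset.sum_range_add]
  rw [Finset.sum_congr rfl (g := fun _ => (1 : ZMod m))
    (by intro x hx; simp at hx; simp; omega)]
  rw [Finset.sum_congr rfl (g := fun _ => (-1 : ZMod m)) (s₁ := Finset.range q)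
    (by intro x hx; simp)]
  simp [h]

lemma eps_exists (m n : ℕ) (hm : Odd m) (hn : Odd n) (hmn : m ≤ n) [NeZero n] :
    ∃ (s : ZMod n → Bool) (E : ZMod n → ZMod m),
      ∀ y, E (y + 1) = E y + (if s y then 1 else -1) := by
  obtain ⟨D, hD⟩ := pot_exists n (fun j => if j < (n + m) / 2 then (1 : ZMod m) else -1) (by
    have h1 : (n + m) / 2 + (n - m) / 2 = n := by
      obtain ⟨a, rfl⟩ := hm
      obtain ⟨b, rfl⟩ := hn
      omega
    have h2 : (n + m) / 2 = (n - m) / 2 + m := by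
      obtain ⟨a, rfl⟩ := hm
      obtain ⟨b, rfl⟩ := hn
      omega
    have := sum_pq m _ _ h2
    rwa [h1] at this)
  exact ⟨fun y => decide (y.val < (n + m) / 2), D, fun y => by rw [hD]; simp⟩

lemma domino_factor (m n : ℕ) (hn3 : 3 ≤ n) {ι : Type*}
    (col : ZMod m → ZMod n → ZMod n → ι) (c : ι) (h1 : (1 : ZMod m) ≠ 0)
    (u v : ZMod n) (huv : u * v = 1) (Q : ZMod m → ZMod n)
    (s : ZMod n → Bool) (E : ZMod n → ZMod m)
    (hE : ∀ y, E (y + 1) = E y + (if s y then 1 else -1))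
    (hcol : ∀ i x x', col i x (x' - x) = c ↔
      ((u * x' - Q (i + 1) = (u * x - Q i) + 1 ∧ s (u * x - Q i) = true) ∨
       (u * x - Q i = (u * x' - Q (i + 1)) + 1 ∧ s (u * x' - Q (i + 1)) = false))) :
    IsCycleFactor (lexCycle m n) (colG m n col c h1) n := by
  let φ : ZMod m × ZMod n ≃ ZMod n × ZMod m :=
    { toFun := fun p => (u * p.2 - Q p.1, p.1 - E (u * p.2 - Q p.1))
      invFun := fun q => (q.2 + E q.1, v * (q.1 + Q (q.2 + E q.1)))
      left_inv := by
        rintro ⟨i, x⟩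
        simp only [sub_add_cancel, Prod.mk.injEq, true_and]
        rw [← mul_assoc, mul_comm v u, huv, one_mul]
      right_inv := by
        rintro ⟨y, w⟩
        have : u * (v * (y + Q (w + E y))) - Q (w + E y) = y := by
          rw [← mul_assoc, huv]; ring
        simp only [this]
        simp }
  refine factor_of_equiv _ _ n hn3 (colG_le _ _ _ _ _) φ ?_
  rintro ⟨i, x⟩ ⟨i', x'⟩
  simp only [colG, φ, Equiv.coe_fn_mk]
  have arc : ∀ (i i' : ZMod m) (x x' : ZMod n),
      (i' = i + 1 ∧ col i x (x' - x) = c) →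
      (i - E (u * x - Q i) = i' - E (u * x' - Q i') ∧
      (u * x' - Q i' = u * x - Q i + 1 ∨ u * x - Q i = u * x' - Q i' + 1)) := by
    rintro i i' x x' ⟨rfl, h⟩
    rw [hcol] at h
    rcases h with ⟨a, b⟩ | ⟨a, b⟩
    · refine ⟨?_, Or.inl a⟩
      rw [a, hE, b]; simp
    · refine ⟨?_, Or.inr a⟩
      rw [a, hE, b]; simp; ring
  have arc2 : ∀ (i i' : ZMod m) (x x' : ZMod n),
      i - E (u * x - Q i) = i' - E (u * x' - Q i') → 
      (u * x' - Q i' = u * x - Q i + 1) →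
      (i' = i + 1 ∧ col i x (x' - x) = c) ∨ (i = i' + 1 ∧ col i' x' (x - x') = c) := by
    intro i i' x x' hw hy
    cases hs : s (u * x - Q i) with
    | true =>
      left
      rw [hy, hE, hs] at hw
      have hi : i' = i + 1 := by
        simp only [if_true] at hw
        linear_combination -hw
      subst hi
      exact ⟨rfl, (hcol _ _ _).2 (Or.inl ⟨hy, hs⟩)⟩
    | false =>
      right
      rw [hy, hE, hs] at hw
      have hi : i = i' + 1 := by
        simp only [Bool.false_eq_true, if_false] at hw
        linear_combination hw
      subst hi
      exact ⟨rfl, (hcol _ _ _).2 (Or.inr ⟨hy, hs⟩)⟩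
  constructor
  · rintro (h | h)
    · exact arc _ _ _ _ h
    · have := arc _ _ _ _ h
      exact ⟨this.1.symm, this.2.symm⟩
  · rintro ⟨hw, hy | hy⟩
    · exact arc2 _ _ _ _ hw hy
    · exact (arc2 _ _ _ _ hw.symm hy).symm

lemma single_factor (m n : ℕ) (hm3 : 3 ≤ m) {ι : Type*}
    (col : ZMod m → ZMod n → ZMod n → ι) (c : ι) (h1 : (1 : ZMod m) ≠ 0)
    (D : ZMod m → ZMod n)
    (hcol : ∀ i x x', col i x (x' - x) = c ↔ x' - x = D (i + 1) - D i) :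
    IsCycleFactor (lexCycle m n) (colG m n col c h1) m := by
  let φ : ZMod m × ZMod n ≃ ZMod m × ZMod n :=
    { toFun := fun p => (p.1, p.2 - D p.1)
      invFun := fun q => (q.1, q.2 + D q.1)
      left_inv := by rintro ⟨i, x⟩; simp
      right_inv := by rintro ⟨i, x⟩; simp }
  refine factor_of_equiv _ _ m hm3 (colG_le _ _ _ _ _) φ ?_
  rintro ⟨i, x⟩ ⟨i', x'⟩
  simp only [colG, φ, Equiv.coe_fn_mk, hcol]
  constructor
  · rintro (⟨rfl, h⟩ | ⟨rfl, h⟩)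
    · exact ⟨by linear_combination -h, Or.inl rfl⟩
    · exact ⟨by linear_combination h, Or.inr rfl⟩
  · rintro ⟨hw, rfl | rfl⟩
    · exact Or.inl ⟨rfl, by linear_combination -hw⟩
    · exact Or.inr ⟨rfl, by linear_combination hw⟩

lemma core (m n α β : ℕ) (hm : Odd m) (hn : Odd n) (h3 : 3 ≤ m) (hmn : m ≤ n)
    {ι κ : Type*} (T : ZMod m → (ι ⊕ κ × Bool ≃ ZMod n)) (c u v : κ → ZMod n)
    (huv : ∀ r, u r * v r = 1) (huc : ∀ r, u r * c r = 2)
    (hT : ∀ i r, T i (Sum.inr (r, true)) = T i (Sum.inr (r, false)) + c r)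
    (D : ι → ZMod m → ZMod n) (hD : ∀ r i, D r (i + 1) = D r i + T i (Sum.inl r))
    (Q : κ → ZMod m → ZMod n)
    (hQ : ∀ r i, Q r (i + 1) = Q r i + (u r * T i (Sum.inr (r, false)) + 1))
    (gι : Fin α ≃ ι) (gκ : Fin β ≃ κ × Bool) : HW (lexCycle m n) m n α β := by
  have : NeZero n := ⟨by omega⟩
  obtain ⟨hm1, h1⟩ := zmod_ne h3
  obtain ⟨s, E, hE⟩ := eps_exists m n hm hn hmn
  let col : ZMod m → ZMod n → ZMod n → ι ⊕ κ × Bool := fun i x d =>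
    match (T i).symm d with
    | Sum.inl r => Sum.inl r
    | Sum.inr (r, true) => Sum.inr (r, s (u r * x - Q r i))
    | Sum.inr (r, false) => Sum.inr (r, ! s (u r * x - Q r i - 1))
  let g : Fin α ⊕ Fin β ≃ ι ⊕ κ × Bool := Equiv.sumCongr gι gκ
  have hcan : ∀ r (a b : ZMod n), u r * a = u r * b → a = b := by
    intro r a b h
    have := congrArg (fun z => v r * z) h
    simp only [← mul_assoc, mul_comm (v r) (u r), huv, one_mul] at this
    exact this
  have ht : ∀ r i x x', x' - x = T i (Sum.inr (r, true)) ↔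
      u r * x' - Q r (i + 1) = (u r * x - Q r i) + 1 := by
    intro r i x x'
    rw [hQ, hT]
    constructor
    · intro h
      linear_combination u r * h + huc r
    · intro h
      apply hcan r
      linear_combination h - huc r
  have hf : ∀ r i x x', x' - x = T i (Sum.inr (r, false)) ↔
      u r * x - Q r i = (u r * x' - Q r (i + 1)) + 1 := by
    intro r i x x'
    rw [hQ]
    constructor
    · intro h
      linear_combination - u r * h
    · intro h
      apply hcan r
      linear_combination -h
  have hcb : ∀ b r i x x', col i x (x' - x) = Sum.inr (r, b) ↔
      ((u r * x' - Q r (i + 1) = (u r * x - Q r i) + 1 ∧ s (u r * x - Q r i) = b) ∨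
       (u r * x - Q r i = (u r * x' - Q r (i + 1)) + 1 ∧ (! s (u r * x' - Q r (i + 1))) = b)) := by
    intro b r i x x'
    rw [← ht, ← hf]
    obtain ⟨z, hz⟩ := (T i).surjective (x' - x)
    have hz' : (T i).symm (x' - x) = z := by rw [← hz]; simp
    simp only [col, hz']
    rw [← hz]
    simp only [(T i).injective.eq_iff]
    rcases z with r' | ⟨r', _ | _⟩
    · simp
    · simp only [Sum.inr.injEq, Prod.mk.injEq, Bool.false_eq_true, and_false, false_and, and_true,
        false_or]
      refine and_congr_right ?_
      rintro rfl
      have := (hf r' i x x').1 hz.symm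
      rw [this]; simp
    · simp only [Sum.inr.injEq, Prod.mk.injEq, Bool.true_eq_false, and_false, false_and, and_true,
        or_false]
      refine and_congr_right ?_
      rintro rfl
      rfl
  refine ⟨fun z => colG m n col (g z) h1, fun j => ?_, fun j => ?_, colG_decomp m n h3 col h1 g⟩
  · refine single_factor m n h3 col _ h1 (D (gι j)) ?_
    intro i x x'
    rw [hD]
    obtain ⟨z, hz⟩ := (T i).surjective (x' - x)
    have hz' : (T i).symm (x' - x) = z := by rw [← hz]; simp
    simp only [col, hz']
    rw [← hz, add_sub_cancel_left, (T i).injective.eq_iff]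
    rcases z with r' | ⟨r', _ | _⟩ <;> simp [g]
  · obtain ⟨⟨r, b⟩, hrb⟩ : ∃ p, p = gκ j := ⟨_, rfl⟩
    have : g (Sum.inr j) = Sum.inr (r, b) := by simp [g, hrb]
    beta_reduce
    rw [this]
    cases b with
    | true =>
      refine domino_factor m n (by omega) col _ h1 (u r) (v r) (huv r) (Q r) s E hE ?_
      intro i x x'
      rw [hcb]; simp
    | false =>
      refine domino_factor m n (by omega) col _ h1 (u r) (v r) (huv r) (Q r)
        (fun y => ! s y) (fun y => - E y) ?_ ?_
      · intro y
        rw [hE]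
        cases s y <;> simp [add_comm]
      · intro i x x'
        rw [hcb]; simp

lemma sum_layers {G : Type*} [AddCommGroup G] (f : ℕ → G) (h : f 0 + f 1 + f 2 = 0)
    (h2 : ∀ t, f (2 * t + 3) + f (2 * t + 4) = 0) (t : ℕ) :
    ∑ j ∈ Finset.range (2 * t + 3), f j = 0 := by
  induction t with
  | zero => simpa [Finset.sum_range_succ] using h
  | succ t ih =>
    rw [show 2 * (t + 1) + 3 = 2 * t + 3 + 1 + 1 by ring, Finset.sum_range_succ,
      Finset.sum_range_succ, ih, zero_add]
    exact h2 t

lemma layers (m n α β : ℕ) (hm : Odd m) (hn : Odd n) (h3 : 3 ≤ m) (hmn : m ≤ n)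
    {ι κ : Type} [Fintype ι] [Fintype κ] (R : Fin 3 → ι ⊕ κ × Bool → ZMod n)
    (hR : ∀ s, Function.Injective (R s)) (c u v : κ → ZMod n)
    (huv : ∀ r, u r * v r = 1) (huc : ∀ r, u r * c r = 2)
    (hc : ∀ s r, R s (Sum.inr (r, true)) = R s (Sum.inr (r, false)) + c r)
    (hι : Fintype.card ι = α) (hκ : Fintype.card κ * 2 = β) (hn2 : α + β = n)
    (hs : ∀ r, R 0 (Sum.inl r) + R 1 (Sum.inl r) + R 2 (Sum.inl r) = 0)
    (he : ∀ r, u r * (R 0 (Sum.inr (r, false)) + R 1 (Sum.inr (r, false)) +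
      R 2 (Sum.inr (r, false))) + 3 = 0) : HW (lexCycle m n) m n α β := by
  have : NeZero n := ⟨by omega⟩
  have : NeZero m := ⟨by omega⟩
  let fl : ι ⊕ κ × Bool → ι ⊕ κ × Bool := Sum.map id (Prod.map id not)
  have hfl : Function.Injective fl := by
    rintro (a | ⟨a, b⟩) (a' | ⟨a', b'⟩) <;> simp [fl]
  let L : ℕ → ι ⊕ κ × Bool → ZMod n := fun j z =>
    if j = 0 then R 0 z else if j = 1 then R 1 z else if j = 2 then R 2 z else
      if j % 2 = 1 then R 0 z else - R 0 (fl z)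
  have hL : ∀ j, Function.Injective (L j) := by
    intro j
    by_cases h0 : j = 0
    · subst h0; simpa [L] using hR 0
    by_cases h1 : j = 1
    · subst h1; simpa [L] using hR 1
    by_cases h2 : j = 2
    · subst h2; simpa [L] using hR 2
    by_cases h4 : j % 2 = 1
    · intro a b h
      simp only [L, h0, h1, h2, h4, if_true, if_false] at h
      exact hR 0 h
    · intro a b h
      simp only [L, h0, h1, h2, h4, if_false] at h
      exact hfl (hR 0 (neg_injective h))
  have hcard : Fintype.card (ι ⊕ κ × Bool) = Fintype.card (ZMod n) := by
    simp [ZMod.card, hι, hκ, hn2]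
  have hLb : ∀ j, Function.Bijective (L j) := fun j =>
    (Fintype.bijective_iff_injective_and_card _).2 ⟨hL j, hcard⟩
  let T : ZMod m → (ι ⊕ κ × Bool ≃ ZMod n) := fun i => Equiv.ofBijective _ (hLb i.val)
  have hTL : ∀ i z, T i z = L i.val z := fun i z => rfl
  obtain ⟨t, ht⟩ : ∃ t, m = 2 * t + 3 := by
    obtain ⟨k, hk⟩ := hm
    exact ⟨k - 1, by omega⟩
  have hmod : ∀ t, (2 * t + 3) % 2 = 1 := fun t => by omega
  have hmod' : ∀ t, (2 * t + 4) % 2 = 0 := fun t => by omega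
  have hD : ∀ r, ∃ D : ZMod m → ZMod n, ∀ i, D (i + 1) = D i + L i.val (Sum.inl r) := by
    intro r
    apply pot_exists m (fun j => L j (Sum.inl r))
    rw [ht]
    apply sum_layers
    · simpa [L] using hs r
    · intro t
      simp [L, hmod, hmod', fl]
  have hQ : ∀ r, ∃ Q : ZMod m → ZMod n, ∀ i, Q (i + 1) = Q i +
      (u r * L i.val (Sum.inr (r, false)) + 1) := by
    intro r
    apply pot_exists m (fun j => u r * L j (Sum.inr (r, false)) + 1)
    rw [ht]
    apply sum_layers
    · have := he r
      simp [L]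
      linear_combination this
    · intro t
      simp [L, hmod, hmod', fl]
      rw [hc]
      linear_combination - huc r
  choose D hD using hD
  choose Q hQ using hQ
  refine core m n α β hm hn h3 hmn T c u v huv huc ?_ D hD Q hQ
    (Fintype.equivFinOfCardEq hι).symm (Fintype.equivFinOfCardEq (by simp [hκ])).symm
  intro i r
  rw [hTL, hTL]
  simp only [L]
  split_ifs
  · exact hc 0 r
  · exact hc 1 r
  · exact hc 2 r
  · exact hc 0 r
  · simp only [fl, Sum.map_inr, Prod.map_apply, id, Bool.not_true, Bool.not_false]
    rw [hc]; ring

lemma int_cast_inj (n : ℕ) (lo x y : ℤ) (hx : lo ≤ x) (hx' : x < lo + n) (hy : lo ≤ y)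
    (hy' : y < lo + n) (h : (x : ZMod n) = (y : ZMod n)) : x = y := by
  rw [ZMod.intCast_eq_intCast_iff] at h
  obtain ⟨k, hk⟩ := h.dvd
  rcases lt_trichotomy k 0 with hk0 | hk0 | hk0
  · nlinarith
  · subst hk0; linarith
  · nlinarith

lemma design (m n α β : ℕ) (hm : Odd m) (hn : Odd n) (h3 : 3 ≤ m) (hmn : m ≤ n)
    (K B' : ℕ) (hnK : n = 2 * K + 1 + 2 * B')
    {ι κ₁ κ₂ : Type} [Fintype ι] [Fintype κ₁] [Fintype κ₂] [Subsingleton κ₁]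
    (A : Fin 3 → ι → ℤ) (hA : ∀ s, Function.Injective (A s))
    (hAb : ∀ s r, -K ≤ A s r ∧ A s r ≤ K) (hA0 : ∀ r, A 0 r + A 1 r + A 2 r = 0)
    (f : Fin 3 → κ₁ → ℤ) (hfb : ∀ s k, -K ≤ f s k - 1 ∧ f s k + 1 ≤ K)
    (hf0 : ∀ r, f 0 r + f 1 r + f 2 r = 0)
    (hAf : ∀ s r k, A s r ≠ f s k - 1 ∧ A s r ≠ f s k + 1)
    (F : Fin 3 → κ₂ → ℤ) (hF : ∀ s, Function.Injective (F s))
    (hFb : ∀ s k, 0 ≤ F s k ∧ F s k < B')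
    (hF0 : ∀ k, 2 * (F 0 k + F 1 k + F 2 k) = 3 * (B' - 1))
    (hι : Fintype.card ι = α) (hκ : (Fintype.card κ₁ + Fintype.card κ₂) * 2 = β)
    (hn2 : α + β = n) : HW (lexCycle m n) m n α β := by
  let I : Fin 3 → ι ⊕ (κ₁ ⊕ κ₂) × Bool → ℤ := fun s z => match z with
    | Sum.inl r => A s r
    | Sum.inr (Sum.inl k, b) => f s k + (if b then 1 else -1)
    | Sum.inr (Sum.inr k, b) => K + 1 + 2 * F s k + (if b then 1 else 0)
  have hI : ∀ s, Function.Injective (I s) := by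
    rintro s (r | ⟨k | k, b⟩) (r' | ⟨k' | k', b'⟩) h
    · simp only [I] at h
      rw [hA s h]
    · have := hAf s r k'
      cases b' <;> simp [I] at h <;> omega
    · have := hAb s r
      have := hFb s k'
      cases b' <;> simp [I] at h <;> omega
    · have := hAf s r' k
      cases b <;> simp [I] at h <;> omega
    · have : k = k' := Subsingleton.elim _ _
      subst this
      cases b <;> cases b' <;> simp [I] at h <;> rfl
    · have := hfb s k
      have := hFb s k'
      cases b <;> cases b' <;> simp [I] at h <;> omega
    · have := hAb s r'
      have := hFb s k
      cases b <;> simp [I] at h <;> omega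
    · have := hfb s k'
      have := hFb s k
      cases b <;> cases b' <;> simp [I] at h <;> omega
    · have h1 : F s k = F s k' := by cases b <;> cases b' <;> simp [I] at h <;> omega
      have h2 : b = b' := by cases b <;> cases b' <;> simp [I] at h <;> first | rfl | omega
      rw [hF s h1, h2]
  have hIb : ∀ s z, -(K : ℤ) ≤ I s z ∧ I s z < -(K : ℤ) + n := by
    rintro s (r | ⟨k | k, b⟩)
    · have := hAb s r
      simp only [I]; omega
    · have := hfb s k
      cases b <;> simp [I] <;> omega
    · have := hFb s k
      cases b <;> simp [I] <;> omega
  have h2n : (2 : ZMod n) * (((n + 1) / 2 : ℕ) : ZMod n) = 1 := by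
    obtain ⟨q, hq⟩ := hn
    have : 2 * ((n + 1) / 2) = n + 1 := by omega
    have h : ((2 * ((n + 1) / 2) : ℕ) : ZMod n) = ((n + 1 : ℕ) : ZMod n) := by rw [this]
    simpa using h
  refine layers m n α β hm hn h3 hmn (fun s z => (I s z : ZMod n)) ?_
    (Sum.elim (fun _ => 2) (fun _ => 1)) (Sum.elim (fun _ => 1) (fun _ => 2))
    (Sum.elim (fun _ => 1) (fun _ => (((n + 1) / 2 : ℕ) : ZMod n))) ?_ ?_ ?_ hι (by simpa using hκ)
    hn2 ?_ ?_
  · intro s z z' h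
    exact hI s (int_cast_inj n _ _ _ (hIb s z).1 (hIb s z).2 (hIb s z').1 (hIb s z').2 h)
  · rintro (k | k)
    · simp
    · simpa using h2n
  · rintro (k | k) <;> simp
  · rintro s (k | k) <;> simp [I]
    ring
  · intro r
    have := hA0 r
    simp only [I]
    exact_mod_cast congrArg (Int.cast : ℤ → ZMod n) this
  · rintro (k | k)
    · have := congrArg (Int.cast : ℤ → ZMod n) (hf0 k)
      push_cast at this
      simp [I]
      linear_combination this
    · have h1 := hF0 k
      have h4 : 2 * ((K + 1 + 2 * F 0 k) + (K + 1 + 2 * F 1 k) + (K + 1 + 2 * F 2 k)) + 3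
          = 3 * (n : ℤ) := by
        rw [hnK]; push_cast; linarith
      have := congrArg (Int.cast : ℤ → ZMod n) h4
      push_cast at this
      simp only [I, Sum.elim_inr]
      push_cast
      simp at this ⊢
      linear_combination this

/-- first coordinate of the standard zero-sum triple -/
def tr1 (b k : ℤ) : ℤ := if k ≤ b then k + b else k - b - 1

def tr (b : ℤ) (s : Fin 3) (k : ℤ) : ℤ :=
  if s = 0 then k else if s = 1 then tr1 b k else 3 * b - k - tr1 b k

lemma tr_inj (b : ℤ) (s : Fin 3) (k k' : ℤ) (h0 : 0 ≤ k) (h1 : k ≤ 2 * b) (h0' : 0 ≤ k')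
    (h1' : k' ≤ 2 * b) (h : tr b s k = tr b s k') : k = k' := by
  unfold tr tr1 at h
  split_ifs at h <;> omega

lemma tr_bd (b : ℤ) (s : Fin 3) (k : ℤ) (h0 : 0 ≤ k) (h1 : k ≤ 2 * b) :
    0 ≤ tr b s k ∧ tr b s k ≤ 2 * b := by
  unfold tr tr1
  split_ifs <;> omega

lemma tr_sum (b k : ℤ) : tr b 0 k + tr b 1 k + tr b 2 k = 3 * b := by
  simp [tr]

def Good (K f0 f1 f2 : ℤ) (y : ℤ → ℤ) : Prop :=
  f0 + f1 + f2 = 0 ∧ (-K ≤ f0 - 1 ∧ f0 + 1 ≤ K) ∧ (-K ≤ f1 - 1 ∧ f1 + 1 ≤ K) ∧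
  (-K ≤ f2 - 1 ∧ f2 + 1 ≤ K) ∧
  (∀ x, -K ≤ x → x ≤ K → x ≠ f0 - 1 → x ≠ f0 + 1 →
    (-K ≤ y x ∧ y x ≤ K ∧ y x ≠ f1 - 1 ∧ y x ≠ f1 + 1 ∧
     -K ≤ -(x + y x) ∧ -(x + y x) ≤ K ∧ -(x + y x) ≠ f2 - 1 ∧ -(x + y x) ≠ f2 + 1)) ∧
  (∀ x x', -K ≤ x → x ≤ K → x ≠ f0 - 1 → x ≠ f0 + 1 →
    -K ≤ x' → x' ≤ K → x' ≠ f0 - 1 → x' ≠ f0 + 1 → x < x' →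
    y x ≠ y x' ∧ x + y x ≠ x' + y x')

set_option maxHeartbeats 4000000 in
lemma good_exists (K : ℤ) (hK : 1 ≤ K) : ∃ f0 f1 f2 y, Good K f0 f1 f2 y := by
  by_cases h1 : K = 1
  · subst h1
    refine ⟨0, 0, 0, fun x => 0, by omega, by omega, by omega, by omega, ?_, ?_⟩ <;> intros <;> dsimp only <;> omega
  by_cases h2 : K = 2
  · subst h2
    refine ⟨0, 0, 0, fun x => if x = 0 then 2 else if x = 2 then -2 else 0, by omega, by omega,
      by omega, by omega, ?_, ?_⟩ <;> intros <;> dsimp only <;> split_ifs <;> omega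
  by_cases h3 : K = 3
  · subst h3
    refine ⟨1, -2, 1, fun x => if x = -3 then 0 else if x = -2 then 1 else if x = -1 then 3 else
      if x = 1 then 2 else -2, by omega, by omega,
      by omega, by omega, ?_, ?_⟩ <;> intros <;> dsimp only <;> split_ifs <;> omega
  by_cases h4 : K = 4
  · subst h4
    refine ⟨3, -1, -2, fun x => if x = -4 then 1 else if x = -3 then -1 else if x = -2 then 2 else
      if x = -1 then 3 else if x = 0 then 4 else if x = 1 then -3 else -4, by omega, by omega,
      by omega, by omega, ?_, ?_⟩ <;> intros <;> dsimp only <;> split_ifs <;> omega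
  by_cases hp : K % 2 = 1
  · obtain ⟨t, ht⟩ : ∃ t, K = 2 * t + 1 := ⟨K / 2, by omega⟩
    subst ht
    refine ⟨t - 1, t + 1, -2 * t, fun x => if x ≤ -t - 3 then x + 2 * t + 2 else
      if x ≤ -4 then x + 2 * t + 5 else if x ≤ t - 3 then x - 2 * t + 5 else
      if x = t - 1 then t + 1 else if x ≤ 2 * t - 2 then x + 2 - 2 * t else x - 4 * t, by omega,
      by omega, by omega, by omega, ?_, ?_⟩ <;> intros <;> dsimp only <;> split_ifs <;> omega
  · obtain ⟨t, ht⟩ : ∃ t, K = 2 * t := ⟨K / 2, by omega⟩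
    subst ht
    refine ⟨t, t - 1, -2 * t + 1, fun x => if x ≤ -2 * t + 2 then x + 4 * t - 2 else
      if x ≤ -t + 2 then x + 2 * t - 5 else if x ≤ -1 then x + 2 * t - 2 else
      if x ≤ t - 2 then x - 2 * t else if x = t then t - 1 else x - 2 * t - 3, by omega,
      by omega, by omega, by omega, ?_, ?_⟩ <;> intros <;> dsimp only <;> split_ifs <;> omega

lemma forward (m n α β : ℕ) (hm : Odd m) (hn : Odd n) (hα : Odd α)
    (h3 : 3 ≤ m) (hmn : m ≤ n) (hαβ : α + β = n) : HW (lexCycle m n) m n α β := by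
  obtain ⟨B, hB⟩ : ∃ B, β = 2 * B := by
    obtain ⟨a, ha⟩ := hα
    obtain ⟨b, hb⟩ := hn
    exact ⟨b - a, by omega⟩
  obtain ⟨K', hK'⟩ := hα
  have hFin : ∀ (B' : ℕ) (k : Fin B'), (B' = 0 ∨ B' % 2 = 1) → (0 : ℤ) ≤ (k : ℕ) ∧
      ((k : ℕ) : ℤ) ≤ 2 * (((B' - 1) / 2 : ℕ) : ℤ) ∧ 2 * (((B' - 1) / 2 : ℕ) : ℤ) = B' - 1 := by
    intro B' k h
    have := k.2
    omega
  have mainF : ∀ (B' : ℕ), (B' = 0 ∨ B' % 2 = 1) → ∃ F : Fin 3 → Fin B' → ℤ,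
      (∀ s, Function.Injective (F s)) ∧ (∀ s k, 0 ≤ F s k ∧ F s k < B') ∧
      (∀ k, 2 * (F 0 k + F 1 k + F 2 k) = 3 * (B' - 1)) := by
    intro B' h
    refine ⟨fun s k => tr (((B' - 1) / 2 : ℕ) : ℤ) s (k : ℕ), ?_, ?_, ?_⟩
    · intro s k k' hk
      have h1 := hFin B' k h
      have h2 := hFin B' k' h
      have := tr_inj _ s _ _ h1.1 h1.2.1 h2.1 h2.2.1 hk
      exact Fin.ext (by exact_mod_cast this)
    · intro s k
      have h1 := hFin B' k h
      have := tr_bd _ s _ h1.1 h1.2.1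
      exact ⟨this.1, by dsimp only; omega⟩
    · intro k
      have h1 := hFin B' k h
      have := tr_sum (((B' - 1) / 2 : ℕ) : ℤ) (k : ℕ)
      simp only
      omega
  by_cases hBo : B = 0 ∨ B % 2 = 1
  · obtain ⟨F, hF1, hF2, hF3⟩ := mainF B hBo
    obtain ⟨A, hA1, hA2, hA3⟩ := mainF (2 * K' + 1) (by omega)
    refine design m n α β hm hn h3 hmn K' B (by omega) (κ₁ := Empty) (κ₂ := Fin B)
      (fun s k => A s k - K') ?_ ?_ ?_ (fun _ k => k.elim) ?_ ?_ ?_ F hF1 hF2 hF3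
      (by simp [hK']) (by simp; omega) hαβ
    · intro s k k' h
      exact hA1 s (by simpa using h)
    · intro s k
      have := hA2 s k
      push_cast at this
      omega
    · intro k
      have := hA3 k
      push_cast at this
      omega
    · intro s k; exact k.elim
    · intro k; exact k.elim
    · intro s r k; exact k.elim
  · obtain ⟨F, hF1, hF2, hF3⟩ := mainF (B - 1) (by omega)
    obtain ⟨f0, f1, f2, y, g0, gb0, gb1, gb2, gy, gi⟩ := good_exists (K' + 1 : ℕ) (by omega)
    let S : Finset ℤ := Finset.Icc (-((K' + 1 : ℕ) : ℤ)) ((K' + 1 : ℕ) : ℤ) \ {f0 - 1, f0 + 1}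
    have hS : ∀ x : S, (-((K' + 1 : ℕ) : ℤ) ≤ x ∧ (x : ℤ) ≤ ((K' + 1 : ℕ) : ℤ)) ∧
        (x : ℤ) ≠ f0 - 1 ∧ (x : ℤ) ≠ f0 + 1 := by
      rintro ⟨x, hx⟩
      simp only [S, Finset.mem_sdiff, Finset.mem_Icc, Finset.mem_insert, Finset.mem_singleton,
        not_or] at hx
      exact hx
    have hcard : Fintype.card S = α := by
      rw [Fintype.card_coe, Finset.card_sdiff_of_subset, Finset.card_pair (by omega), Int.card_Icc]
      · omega
      · intro x hx
        simp only [Finset.mem_insert, Finset.mem_singleton] at hx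
        rw [Finset.mem_Icc]
        omega
    have gi' : ∀ x x' : S, (y x = y x' ∨ (x : ℤ) + y x = x' + y x') → x = x' := by
      intro x x' h
      have a := hS x
      have b := hS x'
      apply Subtype.ext
      rcases lt_trichotomy (x : ℤ) x' with hl | hl | hl
      · have := gi x x' a.1.1 a.1.2 a.2.1 a.2.2 b.1.1 b.1.2 b.2.1 b.2.2 hl
        omega
      · exact hl
      · have := gi x' x b.1.1 b.1.2 b.2.1 b.2.2 a.1.1 a.1.2 a.2.1 a.2.2 hl
        omega
    refine design m n α β hm hn h3 hmn (K' + 1) (B - 1) (by omega) (ι := S) (κ₁ := Unit)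
      (κ₂ := Fin (B - 1)) ![fun x => x, fun x => y x, fun x => -(x + y x)] ?_ ?_ ?_
      ![fun _ => f0, fun _ => f1, fun _ => f2] ?_ ?_ ?_ F hF1 hF2 hF3
      hcard (by simp; omega) hαβ
    · intro s
      fin_cases s
      · intro x x' h; exact Subtype.ext h
      · intro x x' h; exact gi' x x' (Or.inl h)
      · intro x x' h; exact gi' x x' (Or.inr (neg_injective h))
    · intro s x
      have a := hS x
      have b := gy x a.1.1 a.1.2 a.2.1 a.2.2
      fin_cases s <;> simp <;> omega
    · intro x; simp
    · intro s k
      fin_cases s <;> simp <;> omega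
    · intro k; simpa using g0
    · intro s x k
      have a := hS x
      have b := gy x a.1.1 a.1.2 a.2.1 a.2.2
      fin_cases s <;> simp <;> omega

lemma lex_nbr (m n : ℕ) (h3 : 3 ≤ m) (hn : n ≠ 0) :
    ((lexCycle m n).neighborSet (0, 0)).ncard = 2 * n := by
  have : NeZero n := ⟨hn⟩
  obtain ⟨hm1, h1⟩ := zmod_ne h3
  have : (lexCycle m n).neighborSet (0, 0) =
      (fun x : ZMod n => ((1 : ZMod m), x)) '' Set.univ ∪ (fun x => (-1, x)) '' Set.univ := by
    ext ⟨i, x⟩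
    simp only [lexCycle, SimpleGraph.mem_neighborSet, SimpleGraph.fromRel_adj, Set.image_univ,
      Set.mem_union, Set.mem_range, Prod.mk.injEq, exists_eq_right, zero_sub, sub_zero, ne_eq]
    constructor
    · rintro ⟨_, h | h⟩
      · right; rw [← h]; simp
      · left; exact h.symm
    · rintro (h | h)
      · subst h; exact ⟨fun h => h1 h.1.symm, Or.inr rfl⟩
      · subst h; exact ⟨fun h => h1 (by simpa using h.1), Or.inl (by simp)⟩
  rw [this, Set.ncard_union_eq, Set.ncard_image_of_injective, Set.ncard_image_of_injective,
    Set.ncard_univ, Nat.card_zmod]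
  · ring
  · intro a b h; simpa using h
  · intro a b h; simpa using h
  · rw [Set.disjoint_left]
    rintro _ ⟨x, _, rfl⟩ ⟨x', _, h⟩
    simp only [Prod.mk.injEq] at h
    exact hm1 h.1.symm

lemma converse (m n α β : ℕ) (h3 : 3 ≤ m) (hn : n ≠ 0)
    (h : HW (lexCycle m n) m n α β) : α + β = n := by
  have : NeZero n := ⟨hn⟩
  have : NeZero m := ⟨by omega⟩
  obtain ⟨F, hα, hβ, hd, hu⟩ := h
  have hN : (lexCycle m n).neighborSet (0, 0) = ⋃ i, (F i).neighborSet (0, 0) := by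
    ext w
    have := hu s((0, 0), w)
    simp only [SimpleGraph.mem_edgeSet] at this
    simp only [SimpleGraph.mem_neighborSet, Set.mem_iUnion]
    exact this
  have h2 : ∀ i, ((F i).neighborSet (0, 0)).ncard = 2 := by
    rintro (i | i)
    · exact (hα i).2.1 _
    · exact (hβ i).2.1 _
  have hc := lex_nbr m n h3 hn
  rw [hN, Set.ncard_iUnion_of_finite] at hc
  · rw [finsum_eq_sum_of_fintype] at hc
    simp only [h2] at hc
    simp at hc
    omega
  · intro i; exact Set.toFinite _
  · intro i j hij
    have := hd hij
    rw [Function.onFun, Set.disjoint_left]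
    intro w hw hw'
    exact (Set.disjoint_left.1 this : ∀ ⦃a⦄, _ → _) (show s((0, 0), w) ∈ _ from hw) hw'

theorem stmt18 (m n α β : ℕ) (hm : Odd m) (hn : Odd n) (hα : Odd α)
    (h3 : 3 ≤ m) (hmn : m ≤ n) (hαn : α ≤ n) :
    ((β = n - α ∧ ¬((α = 2 ∨ α = 4) ∨ (β = 1 ∨ β = 3))) →
      HW (lexCycle m n) m n α β) ∧
    (HW (lexCycle m n) m n α β → β = n - α) := by
  refine ⟨fun h => forward m n α β hm hn hα h3 hmn (by omega), fun h => ?_⟩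
  have := converse m n α β h3 (by omega) h
  omega
end

section
/- For every odd integer t > 1, ((39t − 11)/2, 5) ∈ HWP(39t; 3, 13); that is, the edge set of the complete graph K_{39t} can be partitioned into (39t − 11)/2 C_3-factors and 5 C_13-factors. -/
open SimpleGraph

/-- The graph of a permutation. -/
def permGraph {V : Type*} (σ : Equiv.Perm V) : SimpleGraph V :=
  SimpleGraph.fromRel (fun u v => σ u = v)

lemma permGraph_adj {V : Type*} {σ : Equiv.Perm V} (hf : ∀ v, σ v ≠ v) (u v : V) :
    (permGraph σ).Adj u v ↔ σ u = v ∨ σ v = u := by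
  unfold permGraph
  rw [SimpleGraph.fromRel_adj]
  constructor
  · exact fun h => h.2
  · intro h
    refine ⟨?_, h⟩
    rintro rfl
    rcases h with h | h <;> exact hf _ h

lemma permGraph_factor {V : Type*} {σ : Equiv.Perm V} {k : ℕ} (hk : k.Prime) (hk3 : 3 ≤ k)
    (hσ : σ ^ k = 1) (hf : ∀ v, σ v ≠ v) : IsCycleFactor ⊤ (permGraph σ) k := by
  have hmp : ∀ v, Function.minimalPeriod σ v = k := by
    intro v
    have h1 : Function.IsPeriodicPt σ k v := by
      unfold Function.IsPeriodicPt Function.IsFixedPt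
      rw [Equiv.Perm.iterate_eq_pow, hσ]; rfl
    rcases (Nat.dvd_prime hk).1 h1.minimalPeriod_dvd with h | h
    · exact absurd (Function.minimalPeriod_eq_one_iff_isFixedPt.1 h) (hf v)
    · exact h
  refine ⟨le_top, ?_, ?_⟩
  · intro v
    have : (permGraph σ).neighborSet v = {σ v, σ.symm v} := by
      ext w
      rw [SimpleGraph.mem_neighborSet, permGraph_adj hf]
      simp only [Set.mem_insert_iff, Set.mem_singleton_iff]
      rw [Equiv.eq_symm_apply]
      exact or_congr eq_comm Iff.rfl
    rw [this, Set.ncard_pair]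
    intro h
    rw [Equiv.eq_symm_apply] at h
    have h2 : Function.IsPeriodicPt σ 2 v := h
    have := h2.minimalPeriod_dvd
    rw [hmp] at this
    have := Nat.le_of_dvd (by norm_num) this
    omega
  · intro v
    have : {w | (permGraph σ).Reachable v w} = (fun i => σ^[i] v) '' Set.Iio k := by
      ext w
      constructor
      · rintro ⟨p⟩
        have key : ∀ {a b : V} (q : (permGraph σ).Walk a b), ∃ i, σ^[i] a = b := by
          intro a b q
          induction q with
          | nil => exact ⟨0, rfl⟩
          | cons h q ih =>
            obtain ⟨i, hi⟩ := ih
            rw [permGraph_adj hf] at h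
            rcases h with h | h
            · exact ⟨i + 1, by rw [Function.iterate_succ_apply, h, hi]⟩
            · refine ⟨i + (k - 1), ?_⟩
              rw [Function.iterate_add_apply, ← hi, ← h, ← Function.iterate_succ_apply,
                Nat.succ_eq_add_one, Nat.sub_add_cancel (by omega), Equiv.Perm.iterate_eq_pow σ k,
                hσ]
              rfl
        obtain ⟨i, hi⟩ := key p
        refine ⟨i % k, Nat.mod_lt _ (by omega), ?_⟩
        show σ^[i % k] v = w
        rw [← hi, ← hmp v, Function.iterate_mod_minimalPeriod_eq]
      · rintro ⟨i, -, rfl⟩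
        show (permGraph σ).Reachable v (σ^[i] v)
        induction i with
        | zero => exact SimpleGraph.Reachable.refl _
        | succ i ih =>
          refine ih.trans (SimpleGraph.Adj.reachable ?_)
          rw [permGraph_adj hf, Function.iterate_succ_apply']
          exact Or.inl rfl
    rw [this, Set.InjOn.ncard_image]
    · rw [Set.ncard_eq_toFinset_card']; simp
    · have := Function.iterate_injOn_Iio_minimalPeriod (f := σ) (x := v)
      rwa [hmp] at this

lemma hw_of_perms {n α β k l : ℕ} (hk : k.Prime) (hk3 : 3 ≤ k) (hl : l.Prime) (hl3 : 3 ≤ l)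
    (hn : n = 2 * (α + β) + 1) (σ : Fin α ⊕ Fin β → Equiv.Perm (Fin n))
    (hf : ∀ i v, σ i v ≠ v)
    (h1 : ∀ i, σ (Sum.inl i) ^ k = 1) (h2 : ∀ i, σ (Sum.inr i) ^ l = 1)
    (hc : ∀ u v, u ≠ v → ∃ i, σ i u = v ∨ σ i v = u) :
    HW (⊤ : SimpleGraph (Fin n)) k l α β := by
  refine ⟨fun i => permGraph (σ i), fun i => permGraph_factor hk hk3 (h1 i) (hf _),
    fun i => permGraph_factor hl hl3 (h2 i) (hf _), ?_, ?_⟩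
  · intro i j hij
    rw [Set.disjoint_left]
    intro e
    induction e using Sym2.ind with
    | _ u v =>
    intro hi hj
    rw [SimpleGraph.mem_edgeSet, permGraph_adj (hf _)] at hi hj
    let φ : (Fin α ⊕ Fin β) × Bool → {w : Fin n // w ≠ u} := fun p =>
      if p.2 then ⟨σ p.1 u, hf _ _⟩ else ⟨(σ p.1).symm u, by
        intro h; rw [Equiv.symm_apply_eq] at h; exact hf _ _ h.symm⟩
    have hs : Function.Surjective φ := by
      rintro ⟨w, hw⟩
      obtain ⟨i, h | h⟩ := hc u w (Ne.symm hw)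
      · exact ⟨(i, true), Subtype.ext h⟩
      · exact ⟨(i, false), Subtype.ext ((Equiv.symm_apply_eq _).2 h.symm)⟩
    have hb : Function.Bijective φ := by
      rw [Fintype.bijective_iff_surjective_and_card]
      refine ⟨hs, ?_⟩
      have : Fintype.card {w : Fin n // w ≠ u} = n - 1 := by
        rw [Fintype.card_subtype_compl]; simp
      rw [this]
      simp
      omega
    have key : ∀ i, (σ i u = v ∨ σ i v = u) → ∃ b, (φ (i, b)).1 = v := by
      rintro i (h | h)
      · exact ⟨true, h⟩
      · exact ⟨false, (Equiv.symm_apply_eq _).2 h.symm⟩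
    obtain ⟨b, hb1⟩ := key i hi
    obtain ⟨c, hc1⟩ := key j hj
    have := hb.1 (Subtype.ext (hb1.trans hc1.symm))
    exact hij (congrArg Prod.fst this)
  · intro e
    induction e using Sym2.ind with
    | _ u v =>
    simp only [SimpleGraph.mem_edgeSet, SimpleGraph.top_adj]
    constructor
    · intro h
      obtain ⟨i, hi⟩ := hc u v h
      exact ⟨i, (permGraph_adj (hf i) u v).2 hi⟩
    · rintro ⟨i, hi⟩
      exact hi.ne

lemma hw_of_perms' {V ι : Type*} [Fintype V] [Fintype ι] {n α β k l : ℕ}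
    (hk : k.Prime) (hk3 : 3 ≤ k) (hl : l.Prime) (hl3 : 3 ≤ l)
    (hn : n = 2 * (α + β) + 1) (hV : Fintype.card V = n) (hι : Fintype.card ι = α)
    (σ : ι → Equiv.Perm V) (τ : Fin β → Equiv.Perm V)
    (hf : ∀ i v, σ i v ≠ v) (hg : ∀ i v, τ i v ≠ v)
    (h1 : ∀ i, σ i ^ k = 1) (h2 : ∀ i, τ i ^ l = 1)
    (hc : ∀ u v, u ≠ v → (∃ i, σ i u = v ∨ σ i v = u) ∨ (∃ i, τ i u = v ∨ τ i v = u)) :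
    HW (⊤ : SimpleGraph (Fin n)) k l α β := by
  let e : V ≃ Fin n := Fintype.equivFinOfCardEq hV
  let a : ι ≃ Fin α := Fintype.equivFinOfCardEq hι
  have hpow : ∀ (s : Equiv.Perm V) (m : ℕ), s ^ m = 1 → (e.permCongr s) ^ m = 1 := by
    intro s m h
    have := map_pow (e.permCongrHom) s m
    rw [h, map_one] at this
    exact this.symm
  refine hw_of_perms hk hk3 hl hl3 hn
    (Sum.elim (fun i => e.permCongr (σ (a.symm i))) (fun i => e.permCongr (τ i))) ?_ ?_ ?_ ?_
  · rintro (i | i) v h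
    · simp only [Sum.elim_inl, Equiv.permCongr_apply] at h
      exact hf _ _ ((Equiv.eq_symm_apply e).2 h)
    · simp only [Sum.elim_inr, Equiv.permCongr_apply] at h
      exact hg _ _ ((Equiv.eq_symm_apply e).2 h)
  · intro i; exact hpow _ _ (h1 _)
  · intro i; exact hpow _ _ (h2 _)
  · intro u v huv
    rcases hc (e.symm u) (e.symm v) (fun h => huv (e.symm.injective h)) with ⟨i, h⟩ | ⟨i, h⟩
    · refine ⟨Sum.inl (a i), ?_⟩
      simp only [Sum.elim_inl, Equiv.permCongr_apply, Equiv.symm_apply_apply]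
      exact h.imp (fun h => by rw [h, Equiv.apply_symm_apply])
        (fun h => by rw [h, Equiv.apply_symm_apply])
    · refine ⟨Sum.inr i, ?_⟩
      simp only [Sum.elim_inr, Equiv.permCongr_apply]
      exact h.imp (fun h => by rw [h, Equiv.apply_symm_apply])
        (fun h => by rw [h, Equiv.apply_symm_apply])

lemma exists_tri {X V : Type*} [Fintype X] [Fintype V]
    (hc : Fintype.card V = 3 * Fintype.card X) (e : X × Fin 3 → V)
    (hs : Function.Surjective e) :
    ∃ σ : Equiv.Perm V, σ ^ 3 = 1 ∧ (∀ v, σ v ≠ v) ∧ ∀ x j, σ (e (x, j)) = e (x, j + 1) := by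
  have hb : Function.Bijective e := by
    rw [Fintype.bijective_iff_surjective_and_card]
    refine ⟨hs, ?_⟩
    simp; omega
  let E := Equiv.ofBijective e hb
  let σ : Equiv.Perm V := E.permCongr ((Equiv.refl X).prodCongr (Equiv.addRight (1 : Fin 3)))
  have hσ : ∀ x j, σ (e (x, j)) = e (x, j + 1) := by
    intro x j
    show E (((Equiv.refl X).prodCongr (Equiv.addRight (1 : Fin 3))) (E.symm (E (x, j)))) = _
    rw [Equiv.symm_apply_apply]
    rfl
  refine ⟨σ, ?_, ?_, hσ⟩
  · ext v
    obtain ⟨⟨x, j⟩, rfl⟩ := hs v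
    show σ (σ (σ (e (x, j)))) = e (x, j)
    rw [hσ, hσ, hσ]
    congr 2
    revert j; decide
  · intro v
    obtain ⟨⟨x, j⟩, rfl⟩ := hs v
    rw [hσ]
    intro h
    have hj : j + 1 = j := congrArg Prod.snd (hb.1 h)
    have h0 : ∀ j : Fin 3, j + 1 ≠ j := by decide
    exact h0 j hj

/-- A translation without fixed points is 3-colourable. -/
lemma exists_col {A : Type*} [Fintype A] [AddCommGroup A] (e : A) (he : e ≠ 0) :
    ∃ κ : A → Fin 3, ∀ x, κ x ≠ κ (x - e) := by
  classical
  have key : ∀ s : Finset A, ∃ κ : A → Fin 3, ∀ x ∈ s, x - e ∈ s → κ x ≠ κ (x - e) := by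
    intro s
    induction s using Finset.induction_on with
    | empty => exact ⟨fun _ => 0, by simp⟩
    | insert a s ha ih =>
      obtain ⟨κ, hκ⟩ := ih
      have h3 : ∀ p q : Fin 3, ∃ r, r ≠ p ∧ r ≠ q := by decide
      obtain ⟨r, hr1, hr2⟩ := h3 (κ (a - e)) (κ (a + e))
      refine ⟨Function.update κ a r, ?_⟩
      intro x hx hxe
      by_cases hxa : x = a
      · subst hxa
        have : x - e ≠ x := by simpa using he
        rw [Function.update_self, Function.update_of_ne this]
        exact hr1
      · by_cases hxa' : x - e = a
        · rw [hxa', Function.update_self, Function.update_of_ne hxa]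
          have : x = a + e := by rw [← hxa']; abel
          rw [this]; exact hr2.symm
        · rw [Function.update_of_ne hxa, Function.update_of_ne hxa']
          exact hκ x (Finset.mem_of_mem_insert_of_ne hx hxa)
            (Finset.mem_of_mem_insert_of_ne hxe hxa')
  obtain ⟨κ, hκ⟩ := key Finset.univ
  exact ⟨κ, fun x => hκ x (Finset.mem_univ _) (Finset.mem_univ _)⟩

/-- Base triples of the inter-level construction; the entry `13 * i + y` is the point `(i, y)`. -/
def tabL : List ℕ :=
  [16, 37, 25, 34, 7, 36, 30, 35, 12, 32, 13, 26, 9, 2, 21, 11, 6, 10, 0, 18, 23, 31, 27, 24,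
   15, 8, 22, 14, 28, 29, 4, 1, 38, 5, 33, 3, 19, 17, 20,
   36, 7, 34, 37, 16, 12, 35, 30, 25, 26, 13, 32, 21, 2, 9, 10, 6, 11, 23, 18, 0, 24, 27, 31,
   22, 8, 15, 29, 28, 14, 38, 1, 4, 3, 33, 5, 20, 17, 19,
   13, 5, 37, 13, 11, 13, 26, 0, 36, 26, 4, 15, 26, 7, 29, 13, 0, 17, 26, 17, 6, 26, 22, 26,
   0, 22, 0, 13, 10, 36, 0, 13, 31, 0, 21, 33, 0, 16, 38]

/-- Base triangles of the intra-level construction. -/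
def tabR : List ℕ :=
  [14, 11, 20, 10, 6, 29, 16, 28, 1, 26, 27, 18, 35, 19, 0, 12, 32, 17, 9, 38, 21, 30, 25, 2,
   31, 24, 7, 34, 15, 4, 37, 23, 3, 5, 13, 36, 8, 22, 33]

/-- Differences used by the long cycles. -/
def tabC : List ℕ := [1, 2, 3, 5, 6, 1, 2, 3, 4, 5, 2, 3, 4, 5, 6]

/-- The points in one level. -/
abbrev Gp := Fin 3 × Fin 13

/-- Decode a point. -/
def dec (p : ℕ) : Gp := (Fin.ofNat 3 (p / 13), Fin.ofNat 13 p)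

/-- Point `j` of base triple `n`. -/
def pt (n : ℕ) (j : Fin 3) : Gp := dec (tabL.getD (3 * n + j.val) 0)

/-- Point `j` of base triangle `n`. -/
def ptR (n : ℕ) (j : Fin 3) : Gp := dec (tabR.getD (3 * n + j.val) 0)

/-- Step of the long cycle `j` on type `i`. -/
def cst (j : Fin 5) (i : Fin 3) : Fin 13 := Fin.ofNat 13 (tabC.getD (5 * i.val + j.val) 0)

/-- Shift of a point. -/
def sft (g : Fin 13) (p : Gp) : Gp := (p.1, p.2 + g)

/-- Labels of factors and of contents. -/
abbrev Lab := (Fin 2 × Fin 13) ⊕ ((Fin 3 × Fin 3) ⊕ Fin 4)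

/-- The contents. -/
def con : Lab → Fin 13 → Fin 3 → Gp
  | Sum.inl (s, g), i, j => sft g (pt (13 * s.val + i.val) j)
  | Sum.inr (Sum.inl (c, p)), i, j => sft i (pt (26 + 3 * c.val + p.val) j)
  | Sum.inr (Sum.inr q), i, j => sft i (pt (35 + q.val) j)

/-- Which content of a group is put into colour `c`. -/
def pos (c a b : Fin 3) : Fin 3 := if c = a then 1 else if c = b then 2 else 0

/-- The content of a factor. -/
def cx (a b : Fin 3) : Lab → Lab
  | Sum.inl p => Sum.inl p
  | Sum.inr (Sum.inl (r, c)) => Sum.inr (Sum.inl (r, pos c a b))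
  | Sum.inr (Sum.inr q) => Sum.inr (Sum.inr q)

lemma pos_surj : ∀ a b : Fin 3, a ≠ b → ∀ p, ∃ c, pos c a b = p := by decide

lemma cx_surj {a b : Fin 3} (h : a ≠ b) (k : Lab) : ∃ f, cx a b f = k := by
  rcases k with p | ⟨r, c⟩ | q
  · exact ⟨Sum.inl p, rfl⟩
  · obtain ⟨c', hc⟩ := pos_surj a b h c
    exact ⟨Sum.inr (Sum.inl (r, c')), by simp only [cx, hc]⟩
  · exact ⟨Sum.inr (Sum.inr q), rfl⟩

lemma lab_cases : ∀ n : Fin 39, (∃ s : Fin 2, ∃ i : Fin 13, 13 * s.val + i.val = n.val) ∨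
    (∃ c p : Fin 3, 26 + 3 * c.val + p.val = n.val) ∨ ∃ q : Fin 4, 35 + q.val = n.val := by
  decide +kernel

lemma con_surj (n : Fin 39) (g : Fin 13) : ∃ k i, ∀ j, con k i j = sft g (pt n.val j) := by
  rcases lab_cases n with ⟨s, i, h⟩ | ⟨c, p, h⟩ | ⟨q, h⟩
  · exact ⟨Sum.inl (s, g), i, fun j => by simp only [con, h]⟩
  · exact ⟨Sum.inr (Sum.inl (c, p)), g, fun j => by simp only [con, h]⟩
  · exact ⟨Sum.inr (Sum.inr q), g, fun j => by simp only [con, h]⟩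

lemma part_const : ∀ s : Fin 2, ∀ g : Gp, ∃ (j : Fin 3) (i : Fin 13),
    pt (13 * s.val + i.val) j = g := by
  decide +kernel

lemma part_single : ∀ q : Fin 4, ∀ u : Fin 3, ∃ j : Fin 3, (pt (35 + q.val) j).1 = u := by
  decide +kernel

lemma part_group : ∀ r c a b a1 b1 b2 : Fin 3, a ≠ b → b ≠ b2 → ∀ u : Fin 3,
    (pt (26 + 3 * r.val + (pos c a b).val) 0).1 = u ∨
    (pt (26 + 3 * r.val + (pos c a1 b1).val) 1).1 = u ∨
    (pt (26 + 3 * r.val + (pos c b b2).val) 2).1 = u := by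
  decide +kernel

lemma tokens : ∀ p q : Fin 3, ∀ δ : Fin 13,
    (∃ n : Fin 39, ((pt n.val 0).1 = p ∧ (pt n.val 1).1 = q ∧
        (pt n.val 1).2 = (pt n.val 0).2 + δ) ∨
      ((pt n.val 1).1 = p ∧ (pt n.val 2).1 = q ∧ (pt n.val 2).2 = (pt n.val 1).2 + δ)) ∨
    ((∃ n : Fin 39, (pt n.val 0).1 = p ∧ (pt n.val 2).1 = q ∧
        (pt n.val 2).2 = (pt n.val 0).2 + δ) ∧
     (∃ n : Fin 39, (pt n.val 0).1 = q ∧ (pt n.val 2).1 = p ∧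
        (pt n.val 0).2 = (pt n.val 2).2 + δ)) := by
  decide +kernel

lemma part_R : ∀ g : Gp, ∃ (j : Fin 3) (i : Fin 13), ptR i.val j = g := by
  decide +kernel

lemma tokens_R : ∀ p q : Fin 3, ∀ δ : Fin 13, (p = q → δ ≠ 0) →
    (∃ n : Fin 13, ∃ j : Fin 3, ((ptR n.val j).1 = p ∧ (ptR n.val (j + 1)).1 = q ∧
        (ptR n.val (j + 1)).2 = (ptR n.val j).2 + δ) ∨
      ((ptR n.val j).1 = q ∧ (ptR n.val (j + 1)).1 = p ∧
        (ptR n.val j).2 = (ptR n.val (j + 1)).2 + δ)) ∨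
    (δ = 0 ∧ (p + 1 = q ∨ q + 1 = p)) ∨
    (p = q ∧ ∃ j : Fin 5, δ = cst j p ∨ δ = - cst j p) := by
  decide +kernel

lemma cst_ne : ∀ j i, cst j i ≠ 0 := by decide +kernel

lemma smul13 : ∀ c : Fin 13, 13 • c = 0 := by decide +kernel

lemma sft_pair {u v a b : Gp} {δ : Fin 13} (hp : u.1 = a.1) (hq : v.1 = b.1)
    (h : v.2 = u.2 + δ) (hδ : δ = b.2 - a.2) : sft (a.2 - u.2) u = a ∧ sft (a.2 - u.2) v = b := by
  constructor
  · exact Prod.ext hp (by simp [sft])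
  · refine Prod.ext hq ?_
    show v.2 + (a.2 - u.2) = b.2
    rw [h, hδ]; abel

/-- The tokens in terms of contents. -/
lemma tokens_con (a b : Gp) :
    (∃ k i, (con k i 0 = a ∧ con k i 1 = b) ∨ (con k i 1 = a ∧ con k i 2 = b)) ∨
    ((∃ k i, con k i 0 = a ∧ con k i 2 = b) ∧ (∃ k i, con k i 0 = b ∧ con k i 2 = a)) := by
  rcases tokens a.1 b.1 (b.2 - a.2) with ⟨n, h | h⟩ | ⟨⟨n, h⟩, ⟨m, h'⟩⟩
  · left
    obtain ⟨k, i, hk⟩ := con_surj n (a.2 - (pt n.val 0).2)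
    refine ⟨k, i, Or.inl ?_⟩
    rw [hk, hk]
    exact sft_pair h.1 h.2.1 h.2.2 rfl
  · left
    obtain ⟨k, i, hk⟩ := con_surj n (a.2 - (pt n.val 1).2)
    refine ⟨k, i, Or.inr ?_⟩
    rw [hk, hk]
    exact sft_pair h.1 h.2.1 h.2.2 rfl
  · right
    constructor
    · obtain ⟨k, i, hk⟩ := con_surj n (a.2 - (pt n.val 0).2)
      refine ⟨k, i, ?_⟩
      rw [hk, hk]
      exact sft_pair h.1 h.2.1 h.2.2 rfl
    · obtain ⟨k, i, hk⟩ := con_surj m (a.2 - (pt m.val 2).2)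
      refine ⟨k, i, ?_⟩
      rw [hk, hk]
      exact (sft_pair h'.2.1 h'.1 h'.2.2 rfl).symm

lemma sft_solve (u : Gp) (g : Gp) (h : u.1 = g.1) : sft (g.2 - u.2) u = g :=
  Prod.ext h (by simp [sft])

lemma inter {A : Type*} [Fintype A] [AddCommGroup A] (d : A) (hd : d + d ≠ 0) :
    ∃ σ : Lab → Equiv.Perm (A × Gp), (∀ f, σ f ^ 3 = 1) ∧ (∀ f v, σ f v ≠ v) ∧
      ∀ x k i, ∃ f, σ f (x, con k i 0) = (x + d, con k i 1) ∧
        σ f (x + d, con k i 1) = (x + (d + d), con k i 2) ∧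
        σ f (x + (d + d), con k i 2) = (x, con k i 0) := by
  obtain ⟨κ, hκ⟩ := exists_col (d + d) hd
  let st : Fin 3 → A := ![0, d, d + d]
  let e : Lab → (A × Fin 13) × Fin 3 → A × Gp := fun f p =>
    (p.1.1 + st p.2, con (cx (κ p.1.1) (κ (p.1.1 - (d + d))) f) p.1.2 p.2)
  have hs : ∀ f, Function.Surjective (e f) := by
    rintro f ⟨y, g⟩
    have red : (∃ j i, con (cx (κ (y - st j)) (κ (y - st j - (d + d))) f) i j = g) →
        ∃ p, e f p = (y, g) := by
      rintro ⟨j, i, h⟩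
      exact ⟨((y - st j, i), j), Prod.ext (sub_add_cancel y (st j)) h⟩
    apply red
    rcases f with ⟨s, g0⟩ | ⟨r, c⟩ | q
    · obtain ⟨j, i, h⟩ := part_const s (g.1, g.2 - g0)
      refine ⟨j, i, ?_⟩
      simp only [cx, con, h, sft, sub_add_cancel]
    · have h := part_group r c (κ y) (κ (y - (d + d))) (κ (y - d)) (κ (y - d - (d + d)))
        (κ (y - (d + d) - (d + d))) (hκ _) (hκ _) g.1
      rcases h with h | h | h
      · refine ⟨0, g.2 - (pt (26 + 3 * r.val +
            (pos c (κ y) (κ (y - (d + d)))).val) 0).2, ?_⟩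
        · simp only [cx, con, st, Matrix.cons_val_zero, sub_zero]
          exact sft_solve _ _ h
      · refine ⟨1, g.2 - (pt (26 + 3 * r.val +
            (pos c (κ (y - d)) (κ (y - d - (d + d)))).val) 1).2, ?_⟩
        · simp only [cx, con, st, Matrix.cons_val_one]
          exact sft_solve _ _ h
      · refine ⟨2, g.2 - (pt (26 + 3 * r.val +
            (pos c (κ (y - (d + d))) (κ (y - (d + d) - (d + d)))).val) 2).2, ?_⟩
        · simp only [cx, con, st, Matrix.cons_val]
          exact sft_solve _ _ h
    · obtain ⟨j, h⟩ := part_single q g.1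
      exact ⟨j, _, sft_solve _ _ h⟩
  have hc : Fintype.card (A × Gp) = 3 * Fintype.card (A × Fin 13) := by
    simp only [Fintype.card_prod, Fintype.card_fin]; ring
  choose σ h1 h2 h3 using fun f => exists_tri hc (e f) (hs f)
  refine ⟨σ, h1, h2, ?_⟩
  intro x k i
  obtain ⟨f, hf⟩ := cx_surj (hκ x) k
  have h0 : ∀ j, e f ((x, i), j) = (x + st j, con k i j) := by
    intro j
    show (x + st j, con (cx (κ x) (κ (x - (d + d))) f) i j) = _
    rw [hf]
  have h4 := h3 f (x, i)
  have a0 := h4 0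
  have a1 := h4 1
  have a2 := h4 2
  rw [h0, h0] at a0 a1 a2
  refine ⟨f, ?_, ?_, ?_⟩
  · simpa [st] using a0
  · simpa [st] using a1
  · simpa [st] using a2

lemma intra (A : Type*) [Fintype A] :
    ∃ (σ : Fin 13 ⊕ Unit → Equiv.Perm (A × Gp)) (τ : Fin 5 → Equiv.Perm (A × Gp)),
      (∀ f, σ f ^ 3 = 1) ∧ (∀ f v, σ f v ≠ v) ∧ (∀ f, τ f ^ 13 = 1) ∧ (∀ f v, τ f v ≠ v) ∧
      ∀ (x : A) (a b : Gp), a ≠ b →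
        (∃ i, σ i (x, a) = (x, b) ∨ σ i (x, b) = (x, a)) ∨
        (∃ i, τ i (x, a) = (x, b) ∨ τ i (x, b) = (x, a)) := by
  have hc : Fintype.card (A × Gp) = 3 * Fintype.card (A × Fin 13) := by
    simp only [Fintype.card_prod, Fintype.card_fin]; ring
  let e : Fin 13 ⊕ Unit → (A × Fin 13) × Fin 3 → A × Gp := fun f p =>
    (p.1.1, Sum.elim (fun g => sft g (ptR p.1.2.val p.2)) (fun _ => (p.2, p.1.2)) f)
  have hs : ∀ f, Function.Surjective (e f) := by
    rintro (g0 | f) ⟨y, g⟩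
    · obtain ⟨j, i, h⟩ := part_R (g.1, g.2 - g0)
      refine ⟨((y, i), j), Prod.ext rfl ?_⟩
      simp only [e, Sum.elim_inl, h, sft, sub_add_cancel]
    · exact ⟨((y, g.2), g.1), rfl⟩
  choose σ h1 h2 h3 using fun f => exists_tri hc (e f) (hs f)
  let τ : Fin 5 → Equiv.Perm (A × Gp) := fun j =>
    { toFun := fun v => (v.1, (v.2.1, v.2.2 + cst j v.2.1))
      invFun := fun v => (v.1, (v.2.1, v.2.2 - cst j v.2.1))
      left_inv := fun v => by simp
      right_inv := fun v => by simp }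
  have hτ : ∀ j x p y, τ j (x, (p, y)) = (x, (p, y + cst j p)) := fun _ _ _ _ => rfl
  refine ⟨σ, τ, h1, h2, ?_, ?_, ?_⟩
  · intro j
    have key : ∀ (n : ℕ) x p y, (τ j ^ n) (x, (p, y)) = (x, (p, y + n • cst j p)) := by
      intro n
      induction n with
      | zero => intro x p y; simp
      | succ n ih =>
        intro x p y
        rw [pow_succ, Equiv.Perm.mul_apply, hτ, ih, succ_nsmul']
        rw [add_assoc]
    ext1 v
    obtain ⟨x, p, y⟩ := v
    rw [key, smul13, add_zero]; rfl
  · rintro j ⟨x, p, y⟩ h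
    rw [hτ] at h
    have := congrArg (fun v => v.2.2) h
    simp only [add_eq_left] at this
    exact cst_ne _ _ this
  · rintro x ⟨p, y⟩ ⟨q, z⟩ hab
    have hR : ∀ (n : Fin 13) (j : Fin 3) (g : Fin 13),
        σ (Sum.inl g) (x, sft g (ptR n.val j)) = (x, sft g (ptR n.val (j + 1))) :=
      fun n j g => h3 (Sum.inl g) (x, n) j
    have hU : ∀ (y : Fin 13) (j : Fin 3), σ (Sum.inr ()) (x, (j, y)) = (x, (j + 1, y)) :=
      fun y j => h3 (Sum.inr ()) (x, y) j
    rcases tokens_R p q (z - y) (by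
        rintro rfl h
        rw [sub_eq_zero] at h
        exact hab (by rw [h])) with ⟨n, j, h | h⟩ | ⟨h0, h⟩ | ⟨rfl, j, h⟩
    · left
      have := sft_pair (a := (p, y)) (b := (q, z)) h.1 h.2.1 h.2.2 rfl
      refine ⟨Sum.inl (y - (ptR n.val j).2), Or.inl ?_⟩
      have h5 := hR n j (y - (ptR n.val j).2)
      rwa [this.1, this.2] at h5
    · left
      have := sft_pair (a := (p, y)) (b := (q, z)) h.2.1 h.1 h.2.2 rfl
      refine ⟨Sum.inl (y - (ptR n.val (j + 1)).2), Or.inr ?_⟩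
      have h5 := hR n j (y - (ptR n.val (j + 1)).2)
      rwa [this.1, this.2] at h5
    · left
      have hzy : z = y := sub_eq_zero.1 h0
      subst hzy
      refine ⟨Sum.inr (), ?_⟩
      rcases h with rfl | rfl
      · left; exact hU _ _
      · right; exact hU _ _
    · right
      refine ⟨j, ?_⟩
      rcases h with h | h
      · left
        rw [hτ, ← h]; simp
      · right
        have : cst j p = y - z := by rw [← neg_sub, h, neg_neg]
        rw [hτ, this]; simp

lemma half_system (m : ℕ) (e : ZMod (2 * m + 1)) (he : e ≠ 0) :
    ∃ s : Fin m, ((s.val + 1 : ℕ) : ZMod (2 * m + 1)) = e ∨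
      ((s.val + 1 : ℕ) : ZMod (2 * m + 1)) = -e := by
  have hlt := ZMod.val_lt e
  have hpos : e.val ≠ 0 := fun h => he ((ZMod.val_eq_zero e).1 h)
  have hcast : ((e.val : ℕ) : ZMod (2 * m + 1)) = e := ZMod.natCast_zmod_val e
  by_cases h : e.val ≤ m
  · refine ⟨⟨e.val - 1, by omega⟩, Or.inl ?_⟩
    rw [show e.val - 1 + 1 = e.val by omega, hcast]
  · refine ⟨⟨2 * m - e.val, by omega⟩, Or.inr ?_⟩
    rw [show 2 * m - e.val + 1 = (2 * m + 1) - e.val by omega, Nat.cast_sub hlt.le, hcast,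
      ZMod.natCast_self, zero_sub]

lemma half_exists (m : ℕ) (e : ZMod (2 * m + 1)) : ∃ h : ZMod (2 * m + 1), h + h = e := by
  refine ⟨((m + 1 : ℕ) : ZMod (2 * m + 1)) * e, ?_⟩
  have : ((2 * m + 1 : ℕ) : ZMod (2 * m + 1)) = 0 := ZMod.natCast_self _
  push_cast at this ⊢
  linear_combination e * this

lemma double_ne (m : ℕ) (s : Fin m) :
    ((s.val + 1 : ℕ) : ZMod (2 * m + 1)) + ((s.val + 1 : ℕ) : ZMod (2 * m + 1)) ≠ 0 := by
  intro h
  rw [← Nat.cast_add, ZMod.natCast_eq_zero_iff] at h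
  have := Nat.le_of_dvd (by omega) h
  have := s.2
  omega

lemma main_aux (m : ℕ) : HW (⊤ : SimpleGraph (Fin (39 * (2 * m + 1)))) 3 13 (39 * m + 14) 5 := by
  let A := ZMod (2 * m + 1)
  let D : Fin m → A := fun s => ((s.val + 1 : ℕ) : ZMod (2 * m + 1))
  choose σ s1 s2 s3 using fun s => inter (D s) (double_ne m s)
  obtain ⟨ρ, τ, r1, r2, t1, t2, rc⟩ := intra A
  refine hw_of_perms' (V := A × Gp) (ι := (Fin m × Lab) ⊕ (Fin 13 ⊕ Unit)) (by norm_num)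
    (by norm_num) (by norm_num) (by norm_num) (by ring) ?_ ?_
    (Sum.elim (fun p => σ p.1 p.2) ρ) τ ?_ t2 ?_ t1 ?_
  · simp only [A, Fintype.card_prod, ZMod.card, Fintype.card_fin]; ring
  · simp only [Fintype.card_sum, Fintype.card_prod, Fintype.card_fin, Fintype.card_unit]; ring
  · rintro (p | p)
    · exact s2 p.1 p.2
    · exact r2 p
  · rintro (p | p)
    · exact s1 p.1 p.2
    · exact r1 p
  · -- coverage
    have cov : ∀ (s : Fin m) (x : A) (a b : Gp),
        ∃ i : (Fin m × Lab) ⊕ (Fin 13 ⊕ Unit),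
          Sum.elim (fun p : Fin m × Lab => σ p.1 p.2) ρ i (x, a) = (x + D s, b) ∨
          Sum.elim (fun p : Fin m × Lab => σ p.1 p.2) ρ i (x + D s, b) = (x, a) := by
      intro s x a b
      rcases tokens_con a b with ⟨k, i, ⟨rfl, rfl⟩ | ⟨rfl, rfl⟩⟩ |
        ⟨⟨k, i, ha, hb⟩, ⟨k', i', hb', ha'⟩⟩
      · obtain ⟨f, hf, -, -⟩ := s3 s x k i
        exact ⟨Sum.inl (s, f), Or.inl hf⟩
      · obtain ⟨f, -, hf, -⟩ := s3 s (x - D s) k i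
        refine ⟨Sum.inl (s, f), Or.inl ?_⟩
        rw [sub_add_cancel, ← add_assoc, sub_add_cancel] at hf
        exact hf
      · obtain ⟨h, hh⟩ := half_exists m (D s)
        have h0 : h ≠ 0 := by
          rintro rfl
          apply double_ne m s
          show D s + D s = 0
          rw [← hh]; simp
        obtain ⟨s', hs' | hs'⟩ := half_system m h h0
        · obtain ⟨f, -, -, hf⟩ := s3 s' x k i
          have hD : D s' = h := hs'
          rw [hD, hh, ha, hb] at hf
          exact ⟨Sum.inl (s', f), Or.inr hf⟩
        · obtain ⟨f, -, -, hf⟩ := s3 s' (x + D s) k' i'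
          have hD : D s' = -h := hs'
          have hx : x + D s + (-h + -h) = x := by rw [← hh]; abel
          rw [hD, hx, ha', hb'] at hf
          exact ⟨Sum.inl (s', f), Or.inl hf⟩
    rintro ⟨x, a⟩ ⟨y, b⟩ huv
    by_cases hxy : x = y
    · subst hxy
      rcases rc x a b (fun h => huv (by rw [h])) with ⟨i, h⟩ | h
      · exact Or.inl ⟨Sum.inr i, h⟩
      · exact Or.inr h
    · left
      obtain ⟨s, hs | hs⟩ := half_system m (y - x) (fun h => hxy (sub_eq_zero.1 h).symm)
      · have hD : x + D s = y := by
          have : D s = y - x := hs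
          rw [this]; abel
        have := cov s x a b
        rwa [hD] at this
      · have hD : y + D s = x := by
          have : D s = -(y - x) := hs
          rw [this]; abel
        obtain ⟨i, h⟩ := cov s y b a
        rw [hD] at h
        exact ⟨i, h.symm⟩

theorem stmt19 (t : ℕ) (ht : Odd t) (h1 : 1 < t) :
    HWPodd (39 * t) 3 13 ((39 * t - 11) / 2) 5 := by
  obtain ⟨m, rfl⟩ := ht
  have : (39 * (2 * m + 1) - 11) / 2 = 39 * m + 14 := by omega
  rw [this]
  exact main_aux m
end
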